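/- arXiv:2301.04932 — 3 statements merged into one kernel-verified Lean document; each statement's English description precedes it below -/
import Mathlib

section
/- Let $k$ be a field, let $n \geq 1$, let $a_1, \dots, a_n$ and $\alpha_1, \dots, \alpha_n$ be positive integers, and set $N + 1 = \prod_{i=1}^{n} \binom{a_i + \alpha_i}{\alpha_i}$. Suppose $A_0$ is a $\beta \times \alpha$ matrix and $B_0$ is a $\gamma \times \beta$ matrix whose entries are homogeneous linear forms in $N+1$ variables $z_0, \dots, z_N$ over $k$, such that $B_0 A_0 = 0$ and for every $w \in k^{N+1} \setminus \{0\}$ the evaluated matrices $A_0(w)$ and $B_0(w)$ have ranks $\alpha$ and $\gamma$ respectively. Let $\bar{A}$ and $\bar{B}$ be obtained from $A_0$ and $B_0$ by substituting for $z_0, \dots, z_N$ the $N+1$ monomials of multidegree $(\alpha_1, \dots, \alpha_n)$ in the $n$ groups of variables $x_{i,0}, \dots, x_{i,a_i}$ ($1 \leq i \leq n$). Then the entries of $\bar{A}$ and $\bar{B}$ are multihomogeneous of multidegree $(\alpha_1, \dots, \alpha_n)$, $\bar{B} \cdot \bar{A} = 0$, and for every tuple $(v_1, \dots, v_n)$ with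 each $v_i \in k^{a_i+1} \setminus \{0\}$ the evaluated matrices $\bar{A}(v_1, \dots, v_n)$ and $\bar{B}(v_1, \dots, v_n)$ have ranks $\alpha$ and $\gamma$ respectively. -/
/-!
The substitution is a ring homomorphism, so it preserves `B₀ * A₀ = 0`, and it multiplies degrees,
so it takes linear forms to forms of multidegree `d`. Evaluating the substituted matrices at `v`
amounts to evaluating the original ones at the image of `v`, so the ranks are preserved as soon as
that image is never zero. For the Segre–Veronese substitution this holds because choosing a
nonzero coordinate of each `v i` gives the monomial `∏ i, x_{i, s i} ^ d i`, which does not vanish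
at `v`.
-/

open MvPolynomial

section Substitution

variable {R S σ τ : Type*} [CommSemiring R] [CommSemiring S] [Algebra R S]

theorem isWeightedHomogeneous_aeval {M M' : Type*} [AddCommMonoid M] [AddCommMonoid M']
    {w : τ → M} {w' : σ → M'} {m : M} {p : MvPolynomial τ R}
    (hp : IsWeightedHomogeneous w p m) (g : M →+ M') {f : τ → MvPolynomial σ S}
    (hf : ∀ t, IsWeightedHomogeneous w' (f t) (g (w t))) :
    IsWeightedHomogeneous w' (aeval f p) (g m) := by
  rw [aeval_def, eval₂_eq]
  refine IsWeightedHomogeneous.sum _ _ _ fun e he ↦ ?_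
  have hdeg : ∑ t ∈ e.support, e t • g (w t) = g m := by
    rw [← hp (mem_support_iff.mp he), Finsupp.weight_apply, Finsupp.sum, map_sum]
    simp only [map_nsmul]
  rw [← hdeg]
  exact (IsWeightedHomogeneous.prod _ _ _ fun t _ ↦ (hf t).pow (e t)).C_mul _

theorem isWeightedHomogeneous_aeval_of_isHomogeneous_one {M : Type*} [AddCommMonoid M]
    {w : σ → M} {d : M} {p : MvPolynomial τ R} (hp : p.IsHomogeneous 1) {f : τ → MvPolynomial σ S}
    (hf : ∀ t, IsWeightedHomogeneous w (f t) d) : IsWeightedHomogeneous w (aeval f p) d := by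
  simpa using isWeightedHomogeneous_aeval hp (multiplesHom M d) (f := f) (by simpa using hf)

theorem matrix_map_aeval_map_eval {m n : Type*} (A : Matrix m n (MvPolynomial τ R))
    (f : τ → MvPolynomial σ R) (x : σ → R) :
    (A.map (aeval f)).map (eval x) = A.map (eval fun t ↦ eval x (f t)) :=
  Matrix.ext fun i j ↦ eval₂Hom_bind₁ (RingHom.id R) x f (A i j)

end Substitution

section Multidegree

variable {ι : Type*} {σ : ι → Type*}

/-- The weight on the variables `x_{i,s}` for which the weighted degree is the degree in the `l`-th
group `x_{l,s}`. A polynomial is multihomogeneous of multidegree `d` if it is weighted homogeneous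
of degree `d l` for `groupWeight l`, for every `l`. -/
def groupWeight [DecidableEq ι] (l : ι) (p : Σ i, σ i) : ℕ := if p.1 = l then 1 else 0

theorem weight_groupWeight [DecidableEq ι] (l : ι) [Fintype (σ l)] (e : (Σ i, σ i) →₀ ℕ) :
    Finsupp.weight (groupWeight l) e = ∑ s, e ⟨l, s⟩ := by
  classical
  induction e using Finsupp.induction_linear with
  | zero => simp
  | add e₁ e₂ h₁ h₂ => simp [h₁, h₂, Finset.sum_add_distrib]
  | single p c =>
    obtain ⟨i, s⟩ := p
    by_cases hi : i = l
    · subst hi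
      simp [groupWeight, Finsupp.weight_single, Finsupp.single_apply]
    · simp [groupWeight, Finsupp.weight_single, hi]

/-- The monomials of multidegree `d` in the groups of variables `x_{i,s}`, `s : σ i`: the
coordinates of the Segre–Veronese embedding of multidegree `d`. -/
def multidegreeMonomials (R : Type*) [CommSemiring R] [∀ i, Fintype (σ i)] (d : ι → ℕ) :
    Set (MvPolynomial (Σ i, σ i) R) :=
  {p | ∃ e : (Σ i, σ i) →₀ ℕ, p = monomial e 1 ∧ ∀ i, ∑ s, e ⟨i, s⟩ = d i}

variable {R : Type*} [CommSemiring R]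

theorem isWeightedHomogeneous_of_mem_multidegreeMonomials [DecidableEq ι] [∀ i, Fintype (σ i)]
    {d : ι → ℕ} {p : MvPolynomial (Σ i, σ i) R} (hp : p ∈ multidegreeMonomials R d) (l : ι) :
    IsWeightedHomogeneous (groupWeight l) p (d l) := by
  obtain ⟨e, rfl, he⟩ := hp
  exact isWeightedHomogeneous_monomial _ _ _ ((weight_groupWeight l e).trans (he l))

theorem exists_mem_multidegreeMonomials_eval_ne_zero [Finite ι] [∀ i, Fintype (σ i)]
    [NoZeroDivisors R] [Nontrivial R] (d : ι → ℕ) {v : ∀ i, σ i → R} (hv : ∀ i, v i ≠ 0) :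
    ∃ p ∈ multidegreeMonomials R d, eval (fun x ↦ v x.1 x.2) p ≠ 0 := by
  classical
  have := Fintype.ofFinite ι
  choose s hs using fun i ↦ Function.ne_iff.mp (hv i)
  let e : (Σ i, σ i) →₀ ℕ := ∑ i, Finsupp.single ⟨i, s i⟩ (d i)
  have hdeg (l : ι) : ∑ t, e ⟨l, t⟩ = d l := by
    rw [← weight_groupWeight]
    simp [e, Finsupp.weight_single, groupWeight]
  have heval : eval (fun x ↦ v x.1 x.2) (monomial e (1 : R)) = ∏ i, v i (s i) ^ d i := by
    simp [e, monomial_sum_one, eval_monomial]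
  refine ⟨monomial e 1, ⟨e, rfl, hdeg⟩, ?_⟩
  rw [heval]
  exact Finset.prod_ne_zero_iff.mpr fun i _ ↦ pow_ne_zero _ (hs i)

theorem monad_pullback_segreVeronese_general [DecidableEq ι] {τ l m n : Type*} [Fintype m]
    [Fintype n] {d : ι → ℕ} {f : τ → MvPolynomial (Σ i, σ i) R}
    (hf : ∀ t i, IsWeightedHomogeneous (groupWeight i) (f t) (d i))
    (hf₀ : ∀ v : ∀ i, σ i → R, (∀ i, v i ≠ 0) → ∃ t, eval (fun x ↦ v x.1 x.2) (f t) ≠ 0)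
    {A : Matrix m n (MvPolynomial τ R)} {B : Matrix l m (MvPolynomial τ R)}
    (hA : ∀ i j, (A i j).IsHomogeneous 1) (hB : ∀ i j, (B i j).IsHomogeneous 1)
    (hBA : B * A = 0) {r s : ℕ}
    (hrank : ∀ w : τ → R, w ≠ 0 → (A.map (eval w)).rank = r ∧ (B.map (eval w)).rank = s) :
    (∀ i j k, IsWeightedHomogeneous (groupWeight k) (A.map (aeval f) i j) (d k)) ∧
    (∀ i j k, IsWeightedHomogeneous (groupWeight k) (B.map (aeval f) i j) (d k)) ∧
    B.map (aeval f) * A.map (aeval f) = 0 ∧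
    ∀ v : ∀ i, σ i → R, (∀ i, v i ≠ 0) →
      ((A.map (aeval f)).map (eval fun x ↦ v x.1 x.2)).rank = r ∧
      ((B.map (aeval f)).map (eval fun x ↦ v x.1 x.2)).rank = s := by
  refine ⟨fun i j k ↦ isWeightedHomogeneous_aeval_of_isHomogeneous_one (hA i j) (hf · k),
    fun i j k ↦ isWeightedHomogeneous_aeval_of_isHomogeneous_one (hB i j) (hf · k), ?_,
    fun v hv ↦ ?_⟩
  · rw [← Matrix.map_mul, hBA, Matrix.map_zero _ (map_zero _)]
  · simp only [matrix_map_aeval_map_eval]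
    exact hrank _ (Function.ne_iff.mpr (hf₀ v hv))

end Multidegree

/-- **Pullback of a linear monad along the Segre–Veronese embedding.**
If `A₀`, `B₀` are matrices of linear forms in `N+1` variables with `B₀A₀ = 0` and of
maximal rank at every nonzero point of `k^{N+1}`, then substituting the `N+1` monomials
of multidegree `(α_1,…,α_n)` for the variables yields matrices `Ā`, `B̄` whose entries
are multihomogeneous of multidegree `(α_1,…,α_n)`, with `B̄Ā = 0`, of maximal ranks `α`
resp. `γ` at every tuple of nonzero vectors. -/
theorem monad_pullback_segreVeronese
    (k : Type) [Field k]
    (n : ℕ) (hn : 1 ≤ n)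
    (a d : Fin n → ℕ) (ha : ∀ i, 0 < a i) (hd : ∀ i, 0 < d i)
    (N : ℕ) (hN : N + 1 = ∏ i, (a i + d i).choose (d i))
    (α β γ : ℕ)
    (A₀ : Matrix (Fin β) (Fin α) (MvPolynomial (Fin (N + 1)) k))
    (B₀ : Matrix (Fin γ) (Fin β) (MvPolynomial (Fin (N + 1)) k))
    (hA₀ : ∀ i j, (A₀ i j).IsHomogeneous 1)
    (hB₀ : ∀ i j, (B₀ i j).IsHomogeneous 1)
    (hBA : B₀ * A₀ = 0)
    (hrank : ∀ w : Fin (N + 1) → k, w ≠ 0 →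
      (A₀.map (MvPolynomial.eval w)).rank = α ∧ (B₀.map (MvPolynomial.eval w)).rank = γ)
    -- `mons` enumerates (bijectively) the monic monomials of multidegree `(α_1,…,α_n)`
    (mons : Fin (N + 1) → MvPolynomial (Σ i : Fin n, Fin (a i + 1)) k)
    (hmons_inj : Function.Injective mons)
    (hmons_range : ∀ p : MvPolynomial (Σ i : Fin n, Fin (a i + 1)) k,
      (∃ t, mons t = p) ↔
      ∃ e : (Σ i : Fin n, Fin (a i + 1)) →₀ ℕ,
        p = MvPolynomial.monomial e 1 ∧
        ∀ i : Fin n, (∑ s : Fin (a i + 1), e ⟨i, s⟩) = d i) :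
    (∀ i j (l : Fin n), MvPolynomial.IsWeightedHomogeneous
        (fun v : Σ i : Fin n, Fin (a i + 1) => if v.1 = l then 1 else 0)
        ((A₀.map (MvPolynomial.aeval mons)) i j) (d l)) ∧
    (∀ i j (l : Fin n), MvPolynomial.IsWeightedHomogeneous
        (fun v : Σ i : Fin n, Fin (a i + 1) => if v.1 = l then 1 else 0)
        ((B₀.map (MvPolynomial.aeval mons)) i j) (d l)) ∧
    (B₀.map (MvPolynomial.aeval mons)) * (A₀.map (MvPolynomial.aeval mons)) = 0 ∧
    (∀ v : (i : Fin n) → Fin (a i + 1) → k, (∀ i, v i ≠ 0) →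
      ((A₀.map (MvPolynomial.aeval mons)).map
        (MvPolynomial.eval (fun p => v p.1 p.2))).rank = α ∧
      ((B₀.map (MvPolynomial.aeval mons)).map
        (MvPolynomial.eval (fun p => v p.1 p.2))).rank = γ) := by
  have hrange : Set.range mons = multidegreeMonomials k d := Set.ext hmons_range
  have hmem (t) : mons t ∈ multidegreeMonomials k d := hrange ▸ Set.mem_range_self t
  refine monad_pullback_segreVeronese_general
    (fun t ↦ isWeightedHomogeneous_of_mem_multidegreeMonomials (hmem t))
    (fun v hv ↦ ?_) hA₀ hB₀ hBA hrank
  simpa [← hrange] using exists_mem_multidegreeMonomials_eval_ne_zero d hv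
end

section
/- Let $k$ be a field, let $n \geq 0$ and $\kappa \geq 1$ be integers, and let $x_0, \dots, x_n, y_0, \dots, y_n \in k$ with $(x_0, \dots, x_n, y_0, \dots, y_n) \neq 0$. Then the $\kappa \times (2n+2\kappa)$ banded matrix $B(x,y)$ has rank $\kappa$, i.e., it is surjective as a linear map $k^{2n+2\kappa} \to k^{\kappa}$. -/
/-- The `κ × (2n+2κ)` banded matrix `B(x,y)` of the Spindler–Trautmann monad:
`B i j = x (j-i)` if `j ≤ n+κ-1` and `0 ≤ j-i ≤ n`;
`B i j = y (j-(n+κ)-i)` if `j ≥ n+κ` and `0 ≤ j-(n+κ)-i ≤ n`; and `0` otherwise. -/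
def spindlerTrautmannB {R : Type} [CommRing R] (n κ : ℕ) (x y : Fin (n + 1) → R) :
    Matrix (Fin κ) (Fin (2 * n + 2 * κ)) R :=
  Matrix.of fun i j =>
    if h : (j : ℕ) < n + κ ∧ (i : ℕ) ≤ (j : ℕ) ∧ (j : ℕ) - (i : ℕ) ≤ n then
      x ⟨(j : ℕ) - (i : ℕ), by omega⟩
    else if h' : n + κ ≤ (j : ℕ) ∧ (i : ℕ) ≤ (j : ℕ) - (n + κ) ∧
        (j : ℕ) - (n + κ) - (i : ℕ) ≤ n then
      y ⟨(j : ℕ) - (n + κ) - (i : ℕ), by omega⟩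
    else 0

/-! `B(x,y)` consists of two banded Toeplitz blocks, one with symbol `x` and one with symbol `y`.
If `x_d` is the first nonzero coefficient of `x`, then the columns `d, …, d + κ - 1` of the block
of `x` form an upper triangular matrix with constant diagonal `x_d`. Hence a block with nonzero
symbol has a nonzero maximal minor `x_d ^ κ`, and its columns already span `k^κ`. -/

section MulVecLin

variable {R l m n : Type*} [Fintype l] [Fintype n]

theorem mulVecLin_surjective_of_submatrix [CommSemiring R] {M : Matrix m n R} (c : l → n)
    (h : Function.Surjective (M.submatrix id c).mulVecLin) :
    Function.Surjective M.mulVecLin := by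
  rw [← LinearMap.range_eq_top, Matrix.range_mulVecLin] at h ⊢
  exact top_le_iff.mp (h.ge.trans (Submodule.span_mono (Set.range_comp_subset_range c M.col)))

theorem rank_eq_card_of_mulVecLin_surjective [CommRing R] [Nontrivial R] [Fintype m]
    {M : Matrix m n R} (h : Function.Surjective M.mulVecLin) : M.rank = Fintype.card m := by
  rw [Matrix.rank, LinearMap.range_eq_top.mpr h, finrank_top, Module.finrank_fintype_fun_eq_card]

end MulVecLin

section BandedToeplitz

variable {R : Type*} {n κ : ℕ}

/-- The `κ × (n + κ)` banded Toeplitz matrix with symbol `x`: each row is `x_0, …, x_n` padded by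
zeros, shifted one step to the right of the row above it. The blocks of `B(x,y)` have this form. -/
def bandedToeplitz [Zero R] (κ : ℕ) (x : Fin (n + 1) → R) : Matrix (Fin κ) (Fin (n + κ)) R :=
  Matrix.of fun i j =>
    if h : (i : ℕ) ≤ j ∧ (j : ℕ) - i ≤ n then x ⟨j - i, Nat.lt_succ_of_le h.2⟩ else 0

theorem bandedToeplitz_apply_eq_zero [Zero R] {x : Fin (n + 1) → R} {d : Fin (n + 1)}
    (hx : ∀ e < d, x e = 0) {i : Fin κ} {j : Fin (n + κ)} (hij : (j : ℕ) < i + d) :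
    bandedToeplitz κ x i j = 0 := by
  rw [bandedToeplitz, Matrix.of_apply]
  split_ifs with h
  · exact hx _ (Fin.lt_def.mpr (by simp only; omega))
  · rfl

theorem bandedToeplitz_apply_of_eq_add [Zero R] (x : Fin (n + 1) → R) {d : Fin (n + 1)}
    {i : Fin κ} {j : Fin (n + κ)} (hij : (j : ℕ) = i + d) : bandedToeplitz κ x i j = x d := by
  rw [bandedToeplitz, Matrix.of_apply, dif_pos (by omega)]
  congr 1
  ext
  simp only
  omega

theorem det_bandedToeplitz_submatrix [CommRing R] {x : Fin (n + 1) → R} {d : Fin (n + 1)}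
    (hx : ∀ e < d, x e = 0) :
    ((bandedToeplitz κ x).submatrix id fun j : Fin κ ↦ ⟨j + d, by omega⟩).det = x d ^ κ := by
  set A := (bandedToeplitz κ x).submatrix id fun j : Fin κ ↦ ⟨j + d, by omega⟩
  have hupper : A.IsUpperTriangular := fun i j hji ↦
    bandedToeplitz_apply_eq_zero hx (Nat.add_lt_add_right hji d)
  have hdiag (i : Fin κ) : A i i = x d := bandedToeplitz_apply_of_eq_add x rfl
  calc A.det = ∏ i, A i i := Matrix.det_of_isUpperTriangular hupper
    _ = ∏ _i : Fin κ, x d := Fintype.prod_congr _ _ hdiag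
    _ = x d ^ κ := Fin.prod_const κ (x d)

theorem bandedToeplitz_mulVecLin_surjective_of_isUnit [CommRing R] {x : Fin (n + 1) → R}
    {d : Fin (n + 1)} (hx : ∀ e < d, x e = 0) (hd : IsUnit (x d)) :
    Function.Surjective (bandedToeplitz κ x).mulVecLin := by
  refine mulVecLin_surjective_of_submatrix (fun j : Fin κ ↦ ⟨j + d, by omega⟩)
    (Matrix.mulVec_surjective_iff_isUnit.mpr ?_)
  rw [Matrix.isUnit_iff_isUnit_det, det_bandedToeplitz_submatrix hx]
  exact hd.pow κ

theorem bandedToeplitz_mulVecLin_surjective [Field R] {x : Fin (n + 1) → R} (hx : x ≠ 0) :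
    Function.Surjective (bandedToeplitz κ x).mulVecLin := by
  obtain ⟨d, hd⟩ := exists_minimal_of_wellFoundedLT (x · ≠ 0) (Function.ne_iff.mp hx)
  exact bandedToeplitz_mulVecLin_surjective_of_isUnit
    (fun e he ↦ not_not.mp (hd.not_prop_of_lt he)) hd.prop.isUnit

end BandedToeplitz

section Blocks

variable {R : Type} [CommRing R] {n κ : ℕ} (x y : Fin (n + 1) → R)

theorem spindlerTrautmannB_submatrix_left :
    (spindlerTrautmannB n κ x y).submatrix id (fun j : Fin (n + κ) ↦ ⟨j, by omega⟩) =
      bandedToeplitz κ x := by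
  ext i j
  simp only [spindlerTrautmannB, bandedToeplitz, Matrix.submatrix_apply, id_eq, Matrix.of_apply,
    j.isLt, j.isLt.not_ge, false_and, true_and, ↓reduceDIte]

theorem spindlerTrautmannB_submatrix_right :
    (spindlerTrautmannB n κ x y).submatrix id (fun j : Fin (n + κ) ↦ ⟨n + κ + j, by omega⟩) =
      bandedToeplitz κ y := by
  ext i j
  simp only [spindlerTrautmannB, bandedToeplitz, Matrix.submatrix_apply, id_eq, Matrix.of_apply,
    Nat.add_sub_cancel_left, Nat.le_add_right, Nat.not_lt_of_le, false_and, true_and, ↓reduceDIte]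

end Blocks

/-- **Surjectivity of `B(x,y)` at nonzero points.** If `(x, y) ≠ 0` then the banded
matrix `B(x,y)` has rank `κ`, i.e. it is surjective as a linear map
`k^{2n+2κ} → k^κ`. -/
theorem spindlerTrautmannB_rank
    (k : Type) [Field k] (n κ : ℕ) (hκ : 1 ≤ κ) (x y : Fin (n + 1) → k)
    (hxy : ¬(x = 0 ∧ y = 0)) :
    (spindlerTrautmannB n κ x y).rank = κ ∧
    Function.Surjective (spindlerTrautmannB n κ x y).mulVecLin := by
  have hsurj : Function.Surjective (spindlerTrautmannB n κ x y).mulVecLin := by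
    rcases not_and_or.mp hxy with hx | hy
    · apply mulVecLin_surjective_of_submatrix fun j : Fin (n + κ) ↦ ⟨j, by omega⟩
      rw [spindlerTrautmannB_submatrix_left]
      exact bandedToeplitz_mulVecLin_surjective hx
    · apply mulVecLin_surjective_of_submatrix fun j : Fin (n + κ) ↦ ⟨n + κ + j, by omega⟩
      rw [spindlerTrautmannB_submatrix_right]
      exact bandedToeplitz_mulVecLin_surjective hy
  exact ⟨(rank_eq_card_of_mulVecLin_surjective hsurj).trans (Fintype.card_fin κ), hsurj⟩
end

section
/- Let $k$ be a field, let $n \geq 0$ and $\kappa \geq 1$ be integers, and let $x_0, \dots, x_n, y_0, \dots, y_n \in k$ with $(x_0, \dots, x_n, y_0, \dots, y_n) \neq 0$. Then the $(2n+2\kappa) \times \kappa$ banded matrix $A(x,y)$ has rank $\kappa$, i.e., it is injective as a linear map $k^{\kappa} \to k^{2n+2\kappa}$. -/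
/-- The `(2n+2κ) × κ` banded matrix `A(x,y)` of the Spindler–Trautmann monad:
`A i j = -y (i-j)` if `i ≤ n+κ-1` and `0 ≤ i-j ≤ n`;
`A i j = x (i-(n+κ)-j)` if `i ≥ n+κ` and `0 ≤ i-(n+κ)-j ≤ n`; and `0` otherwise. -/
def spindlerTrautmannA {R : Type} [CommRing R] (n κ : ℕ) (x y : Fin (n + 1) → R) :
    Matrix (Fin (2 * n + 2 * κ)) (Fin κ) R :=
  Matrix.of fun i j =>
    if h : (i : ℕ) < n + κ ∧ (j : ℕ) ≤ (i : ℕ) ∧ (i : ℕ) - (j : ℕ) ≤ n then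
      -y ⟨(i : ℕ) - (j : ℕ), by omega⟩
    else if h' : n + κ ≤ (i : ℕ) ∧ (j : ℕ) ≤ (i : ℕ) - (n + κ) ∧
        (i : ℕ) - (n + κ) - (j : ℕ) ≤ n then
      x ⟨(i : ℕ) - (n + κ) - (j : ℕ), by omega⟩
    else 0

/-!
Identify a vector with the polynomial in `T` whose coefficients are its entries. Then `A(x, y)` is
the map `V ↦ (-Y * V, X * V)` on polynomials `V` of degree less than `κ`: its rows list all the
coefficients of the two products. If `X * V = Y * V = 0`, then `(X + T ^ N * Y) * V = 0`, and for
`N` greater than the degree of `X` the first factor has the coefficients of `X` and `Y` side by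
side. By McCoy's theorem `V = 0` unless a nonzero scalar annihilates all of these coefficients,
which over a field means that they all vanish.
-/

open Polynomial

section OfFn

variable {R : Type*} [Semiring R] [DecidableEq R] {n κ : ℕ}

theorem coeff_ofFn (v : Fin n → R) (m : ℕ) :
    (ofFn n v).coeff m = if h : m < n then v ⟨m, h⟩ else 0 := by
  split_ifs with h
  · exact ofFn_coeff_eq_val_of_lt v h
  · exact ofFn_coeff_eq_zero_of_ge v (not_lt.1 h)

theorem ofFn_eq_zero_iff {v : Fin n → R} : ofFn n v = 0 ↔ v = 0 :=
  map_eq_zero_iff _ (injective_ofFn n)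

theorem smul_ofFn_eq_zero_iff {r : R} {v : Fin n → R} : r • ofFn n v = 0 ↔ r • v = 0 := by
  rw [← map_smul, ofFn_eq_zero_iff]

theorem coeff_mul_ofFn (p : R[X]) (v : Fin κ → R) (m : ℕ) :
    (p * ofFn κ v).coeff m = ∑ j : Fin κ, (if ↑j ≤ m then p.coeff (m - j) else 0) * v j := by
  simp only [ofFn_eq_sum_monomial, Finset.mul_sum, finsetSum_coeff, ← C_mul_X_pow_eq_monomial,
    ← mul_assoc, coeff_mul_X_pow', coeff_mul_C, ite_mul, zero_mul]

theorem coeff_ofFn_mul_ofFn_of_le {m : ℕ} (u : Fin n → R) (v : Fin κ → R) (hm : n + κ ≤ m + 1) :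
    (ofFn n u * ofFn κ v).coeff m = 0 := by
  rw [coeff_mul_ofFn]
  refine Finset.sum_eq_zero fun j _ => ?_
  rw [ofFn_coeff_eq_zero_of_ge u (by omega), ite_self, zero_mul]

end OfFn

theorem add_X_pow_mul_eq_zero_iff {R : Type*} [Semiring R] {p q : R[X]} {N : ℕ}
    (hp : p.natDegree < N) : p + X ^ N * q = 0 ↔ p = 0 ∧ q = 0 := by
  refine ⟨fun h => ⟨?_, ?_⟩, by rintro ⟨rfl, rfl⟩; simp⟩
  · ext m
    obtain hm | hm := lt_or_ge m N
    · simpa [coeff_X_pow_mul', hm.not_ge] using congrArg (coeff · m) h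
    · exact coeff_eq_zero_of_natDegree_lt (hp.trans_le hm)
  · ext m
    have hpm : p.coeff (m + N) = 0 := coeff_eq_zero_of_natDegree_lt (by omega)
    simpa [coeff_X_pow_mul, hpm] using congrArg (coeff · (m + N)) h

theorem eq_zero_of_mul_eq_zero_of_smul₂ {R : Type*} [CommSemiring R] {p q f : R[X]}
    (hpq : ∀ r : R, r • p = 0 → r • q = 0 → r = 0) (hpf : p * f = 0) (hqf : q * f = 0) :
    f = 0 := by
  let N := p.natDegree + 1
  refine eq_zero_of_mul_eq_zero_of_smul (p + X ^ N * q) (fun r hr => ?_) f ?_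
  · have hdeg : (r • p).natDegree < N := Nat.lt_succ_of_le (natDegree_smul_le r p)
    rw [smul_add, ← mul_smul_comm, add_X_pow_mul_eq_zero_iff hdeg] at hr
    exact hpq r hr.1 hr.2
  · rw [add_mul, mul_assoc, hpf, hqf, mul_zero, add_zero]

namespace spindlerTrautmannA

open scoped Matrix

variable {R : Type} [CommRing R] [DecidableEq R] {n κ : ℕ} (x y : Fin (n + 1) → R)

theorem apply_of_lt {i : Fin (2 * n + 2 * κ)} (hi : (i : ℕ) < n + κ) (j : Fin κ) :
    spindlerTrautmannA n κ x y i j =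
      -(if (j : ℕ) ≤ i then (ofFn (n + 1) y).coeff (i - j) else 0) := by
  simp only [spindlerTrautmannA, Matrix.of_apply, coeff_ofFn]
  split_ifs <;> first | omega | simp

theorem apply_of_le {i : Fin (2 * n + 2 * κ)} (hi : n + κ ≤ i) (j : Fin κ) :
    spindlerTrautmannA n κ x y i j =
      if (j : ℕ) ≤ i - (n + κ) then (ofFn (n + 1) x).coeff (i - (n + κ) - j) else 0 := by
  simp only [spindlerTrautmannA, Matrix.of_apply, coeff_ofFn]
  split_ifs <;> first | omega | rfl

theorem mulVec_of_lt {i : Fin (2 * n + 2 * κ)} (hi : (i : ℕ) < n + κ) (v : Fin κ → R) :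
    (spindlerTrautmannA n κ x y *ᵥ v) i = -(ofFn (n + 1) y * ofFn κ v).coeff i := by
  simp only [Matrix.mulVec, dotProduct, apply_of_lt x y hi, neg_mul, Finset.sum_neg_distrib,
    coeff_mul_ofFn]

theorem mulVec_of_le {i : Fin (2 * n + 2 * κ)} (hi : n + κ ≤ i) (v : Fin κ → R) :
    (spindlerTrautmannA n κ x y *ᵥ v) i =
      (ofFn (n + 1) x * ofFn κ v).coeff (i - (n + κ)) := by
  simp only [Matrix.mulVec, dotProduct, apply_of_le x y hi, coeff_mul_ofFn]

theorem mulVec_eq_zero_iff (v : Fin κ → R) :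
    spindlerTrautmannA n κ x y *ᵥ v = 0 ↔
      ofFn (n + 1) x * ofFn κ v = 0 ∧ ofFn (n + 1) y * ofFn κ v = 0 := by
  refine ⟨fun h => ⟨?_, ?_⟩, fun ⟨hx, hy⟩ => ?_⟩
  · ext m
    obtain hm | hm := lt_or_ge m (n + κ)
    · have hrow := mulVec_of_le x y (i := ⟨n + κ + m, by omega⟩) (Nat.le_add_right _ m) v
      simpa [h] using hrow.symm
    · exact coeff_ofFn_mul_ofFn_of_le x v (by omega)
  · ext m
    obtain hm | hm := lt_or_ge m (n + κ)
    · have hrow := mulVec_of_lt x y (i := ⟨m, by omega⟩) hm v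
      simpa [h] using hrow.symm
    · exact coeff_ofFn_mul_ofFn_of_le y v (by omega)
  · ext i
    obtain hi | hi := lt_or_ge (i : ℕ) (n + κ)
    · simp [mulVec_of_lt x y hi, hy]
    · simp [mulVec_of_le x y hi, hx]

end spindlerTrautmannA

theorem spindlerTrautmannA_rank_general {R : Type} [CommRing R] [Nontrivial R] (n κ : ℕ)
    (x y : Fin (n + 1) → R) (hxy : ∀ r : R, r • x = 0 → r • y = 0 → r = 0) :
    (spindlerTrautmannA n κ x y).rank = κ ∧
    Function.Injective (spindlerTrautmannA n κ x y).mulVecLin := by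
  classical
  have hinj : Function.Injective (spindlerTrautmannA n κ x y).mulVecLin := by
    refine (injective_iff_map_eq_zero _).2 fun v hv => ?_
    obtain ⟨hxv, hyv⟩ := (spindlerTrautmannA.mulVec_eq_zero_iff x y v).1 hv
    refine ofFn_eq_zero_iff.1 (eq_zero_of_mul_eq_zero_of_smul₂ (fun r hrx hry => ?_) hxv hyv)
    exact hxy r (smul_ofFn_eq_zero_iff.1 hrx) (smul_ofFn_eq_zero_iff.1 hry)
  refine ⟨?_, hinj⟩
  rw [Matrix.rank, LinearMap.finrank_range_of_inj hinj, Module.finrank_fin_fun]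

/-- **Injectivity of `A(x,y)` at nonzero points.** If `(x, y) ≠ 0` then the banded
matrix `A(x,y)` has rank `κ`, i.e. it is injective as a linear map
`k^κ → k^{2n+2κ}`. -/
theorem spindlerTrautmannA_rank
    (k : Type) [Field k] (n κ : ℕ) (hκ : 1 ≤ κ) (x y : Fin (n + 1) → k)
    (hxy : ¬(x = 0 ∧ y = 0)) :
    (spindlerTrautmannA n κ x y).rank = κ ∧
    Function.Injective (spindlerTrautmannA n κ x y).mulVecLin := by
  refine spindlerTrautmannA_rank_general n κ x y fun r hrx hry => by_contra fun hr => hxy ?_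
  exact ⟨(smul_eq_zero_iff_right hr).1 hrx, (smul_eq_zero_iff_right hr).1 hry⟩
end
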